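/- Let μ ∈ ℝ, μ ≠ 0, let A₀, A₁, A₂ ∈ ℝ, let h : ℝ → ℝ be smooth with h'(x) ≠ 0 for all x, and define a₀(x) = (A₀/μ)h'⁴, a₁(x) = (A₁ − A₀h)h'³, a₂(x) = ((1/2)μA₀h² + (2A₀/μ)h'² − μA₁h + A₂/μ)h'². Suppose a₃, a₄ : ℝ → ℝ are smooth and satisfy, for all x ∈ ℝ: μa₂h' + a₃'h' − 3a₁h'' − a₃h'' = 0; μa₃h' + a₄'h' − 2a₂h'' = 0; μa₄h' − a₃h'' = 0. Define the complex-valued function G(x) = (h''(x)/(μh'(x)) − i)·a₃(x) − ((1/2)μA₀h(x)² + (A₀/μ)h'(x)² − μA₁h(x) + A₂/μ)·h'(x)² + i(A₁ − A₀h(x))h'(x)³. Then the function x ↦ e^{iμx}·G(x) is constant on ℝ. -/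

import Mathlib

/-!
For `F = e^{μy} ∑ aₖ(x) p_xⁿ⁻ᵏ p_yᵏ` and `H = ½ h'(x)² (p_x² + p_y²)` one has
`{F, H} = h'² (p_x ∂F/∂x + p_y ∂F/∂y) - h' h'' (p_x² + p_y²) ∂F/∂p_x`.
On the null covector `(p_x, p_y) = (1, i)` the last term vanishes, so `{F, H} = 0` reduces to
`G' + iμG = 0` for `G = ∑ aₖ iᵏ`, whence `e^{iμx} G` is constant. In degree four
`G = a₀ + i a₁ - a₂ - i a₃ + a₄`. The given `a₀, a₁, a₂` solve the first three coefficient equations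
of `{F, H} = 0`, the hypotheses are the other three, and the last of these expresses `a₄`
through `a₃`.
-/

open Polynomial

section LinearODE

variable {E : Type*} [NormedAddCommGroup E] [NormedSpace ℂ E]

lemma exists_forall_exp_smul_eq_of_hasDerivWithinAt {s : Set ℝ} (hs : Convex ℝ s) {c : ℂ}
    {G : ℝ → E} (hG : ∀ x ∈ s, HasDerivWithinAt G (-(c • G x)) s x) :
    ∃ b : E, ∀ x ∈ s, Complex.exp (c * x) • G x = b := by
  have hderiv : ∀ x ∈ s, HasDerivWithinAt (fun t : ℝ ↦ Complex.exp (c * t) • G t) 0 s x := by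
    intro x hx
    have hexp : HasDerivAt (fun t : ℝ ↦ Complex.exp (c * t)) (Complex.exp (c * x) * c) x := by
      simpa using ((hasDerivAt_id (x : ℂ)).const_mul c).cexp.comp_ofReal
    refine (hexp.hasDerivWithinAt.smul (hG x hx)).congr_deriv ?_
    rw [smul_neg, mul_smul, neg_add_cancel]
  obtain rfl | ⟨x₀, hx₀⟩ := s.eq_empty_or_nonempty
  · exact ⟨0, by simp⟩
  · refine ⟨Complex.exp (c * x₀) • G x₀, fun x hx ↦ ?_⟩
    simpa [sub_eq_zero] using
      hs.norm_image_sub_le_of_norm_hasDerivWithin_le hderiv (fun _ _ ↦ norm_zero.le) hx₀ hx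

end LinearODE

section PoissonBracket

variable {R : Type*} [CommRing R]

/-- The Poisson bracket of `F = e^{μy} ∑ aₖ(x) p_xⁿ⁻ᵏ p_yᵏ` with `H = ½ h'(x)² (p_x² + p_y²)`,
divided by `h'(x) e^{μy}`, at a fixed `x`, where `p = h'(x)` and `q = h''(x)`. Homogeneous
polynomials in `(p_x, p_y)` are encoded as polynomials in `X = p_y / p_x`: `B` is `∑ aₖ(x) Xᵏ`,
`B'` is `∑ aₖ'(x) Xᵏ`, and `n B - X ∂B/∂X` stands for `∂F/∂p_x`. -/
noncomputable def fiberPoissonBracket (n : ℕ) (μ p q : R) (B B' : R[X]) : R[X] :=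
  C p * (B' + C μ * X * B) - C q * (1 + X ^ 2) * (n • B - X * derivative B)

lemma aeval_fiberPoissonBracket {S : Type*} [CommRing S] [Algebra R S] {i : S} (hi : i ^ 2 = -1)
    (n : ℕ) (μ p q : R) (B B' : R[X]) :
    aeval i (fiberPoissonBracket n μ p q B B') =
      algebraMap R S p * (aeval i B' + algebraMap R S μ * i * aeval i B) := by
  simp [fiberPoissonBracket, hi]

lemma ofFn_five [DecidableEq R] (b₀ b₁ b₂ b₃ b₄ : R) :
    ofFn 5 ![b₀, b₁, b₂, b₃, b₄] =
      C b₀ + C b₁ * X + C b₂ * X ^ 2 + C b₃ * X ^ 3 + C b₄ * X ^ 4 := by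
  simp [ofFn_eq_sum_monomial, Fin.sum_univ_succ, ← C_mul_X_pow_eq_monomial, add_assoc]

lemma fiberPoissonBracket_four_ofFn_five [DecidableEq R]
    (μ p q b₀ b₁ b₂ b₃ b₄ b₀' b₁' b₂' b₃' b₄' : R) :
    fiberPoissonBracket 4 μ p q (ofFn 5 ![b₀, b₁, b₂, b₃, b₄]) (ofFn 5 ![b₀', b₁', b₂', b₃', b₄']) =
      C (p * b₀' - 4 * q * b₀)
        + C (p * b₁' + μ * p * b₀ - 3 * q * b₁) * X
        + C (p * b₂' + μ * p * b₁ - q * (2 * b₂ + 4 * b₀)) * X ^ 2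
        + C (p * b₃' + μ * p * b₂ - q * (b₃ + 3 * b₁)) * X ^ 3
        + C (p * b₄' + μ * p * b₃ - 2 * q * b₂) * X ^ 4
        + C (μ * p * b₄ - q * b₃) * X ^ 5 := by
  simp only [fiberPoissonBracket, ofFn_five, derivative_C, derivative_C_mul, derivative_X,
    derivative_X_pow, nsmul_eq_mul, map_add, map_sub, map_mul, map_ofNat C]
  push_cast [map_ofNat C]
  ring

lemma aeval_I_ofFn_five (b₀ b₁ b₂ b₃ b₄ : ℝ) :
    aeval Complex.I (ofFn 5 ![b₀, b₁, b₂, b₃, b₄]) =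
      b₀ + Complex.I * b₁ - b₂ - Complex.I * b₃ + b₄ := by
  simp only [ofFn_five, map_add, map_mul, map_pow, aeval_C, aeval_X, Complex.coe_algebraMap,
    Complex.I_sq, Complex.I_pow_three, Complex.I_pow_four]
  ring

theorem exists_forall_exp_mul_aeval_I_eq_of_fiberPoissonBracket_eq_zero {s : Set ℝ}
    (hs : Convex ℝ s) {m n : ℕ} {μ : ℝ} {p q : ℝ → ℝ} {a a' : ℝ → Fin m → ℝ}
    (hp : ∀ x ∈ s, p x ≠ 0) (ha : ∀ x ∈ s, HasDerivWithinAt a (a' x) s x)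
    (hbracket : ∀ x ∈ s,
      fiberPoissonBracket n μ (p x) (q x) (ofFn m (a x)) (ofFn m (a' x)) = 0) :
    ∃ c : ℂ, ∀ x ∈ s,
      Complex.exp (Complex.I * μ * x) * aeval Complex.I (ofFn m (a x)) = c := by
  let evalI : (Fin m → ℝ) →L[ℝ] ℂ :=
    ((aeval Complex.I).toLinearMap ∘ₗ ofFn m).toContinuousLinearMap
  refine exists_forall_exp_smul_eq_of_hasDerivWithinAt hs (G := evalI ∘ a) fun x hx ↦ ?_
  have hnull : aeval Complex.I (ofFn m (a' x)) +
      (μ : ℂ) * Complex.I * aeval Complex.I (ofFn m (a x)) = 0 := by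
    have hzero := congrArg (aeval Complex.I) (hbracket x hx)
    rw [aeval_fiberPoissonBracket Complex.I_sq, map_zero] at hzero
    exact (mul_eq_zero.mp hzero).resolve_left (by simpa using hp x hx)
  refine (evalI.hasFDerivAt.comp_hasDerivWithinAt x (ha x hx)).congr_deriv ?_
  simp only [evalI, Function.comp_apply, LinearMap.coe_toContinuousLinearMap', LinearMap.comp_apply,
    AlgHom.toLinearMap_apply, smul_eq_mul]
  linear_combination hnull

theorem exists_forall_exp_mul_eq_of_quartic_bracket_eqs {s : Set ℝ} (hs : Convex ℝ s) {μ : ℝ}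
    {p q a₀ a₁ a₂ a₃ a₄ a₀' a₁' a₂' a₃' a₄' : ℝ → ℝ} (hp : ∀ x ∈ s, p x ≠ 0)
    (ha₀ : ∀ x ∈ s, HasDerivWithinAt a₀ (a₀' x) s x)
    (ha₁ : ∀ x ∈ s, HasDerivWithinAt a₁ (a₁' x) s x)
    (ha₂ : ∀ x ∈ s, HasDerivWithinAt a₂ (a₂' x) s x)
    (ha₃ : ∀ x ∈ s, HasDerivWithinAt a₃ (a₃' x) s x)
    (ha₄ : ∀ x ∈ s, HasDerivWithinAt a₄ (a₄' x) s x)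
    (heq₀ : ∀ x ∈ s, p x * a₀' x - 4 * q x * a₀ x = 0)
    (heq₁ : ∀ x ∈ s, p x * a₁' x + μ * p x * a₀ x - 3 * q x * a₁ x = 0)
    (heq₂ : ∀ x ∈ s, p x * a₂' x + μ * p x * a₁ x - q x * (2 * a₂ x + 4 * a₀ x) = 0)
    (heq₃ : ∀ x ∈ s, p x * a₃' x + μ * p x * a₂ x - q x * (a₃ x + 3 * a₁ x) = 0)
    (heq₄ : ∀ x ∈ s, p x * a₄' x + μ * p x * a₃ x - 2 * q x * a₂ x = 0)
    (heq₅ : ∀ x ∈ s, μ * p x * a₄ x - q x * a₃ x = 0) :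
    ∃ c : ℂ, ∀ x ∈ s, Complex.exp (Complex.I * μ * x) *
      (a₀ x + Complex.I * a₁ x - a₂ x - Complex.I * a₃ x + a₄ x) = c := by
  have ha : ∀ x ∈ s, HasDerivWithinAt (fun t ↦ ![a₀ t, a₁ t, a₂ t, a₃ t, a₄ t])
      ![a₀' x, a₁' x, a₂' x, a₃' x, a₄' x] s x := by
    intro x hx
    refine hasDerivWithinAt_pi.mpr fun k ↦ ?_
    fin_cases k
    exacts [ha₀ x hx, ha₁ x hx, ha₂ x hx, ha₃ x hx, ha₄ x hx]
  have hbracket : ∀ x ∈ s, fiberPoissonBracket 4 μ (p x) (q x)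
      (ofFn 5 ![a₀ x, a₁ x, a₂ x, a₃ x, a₄ x])
      (ofFn 5 ![a₀' x, a₁' x, a₂' x, a₃' x, a₄' x]) = 0 := by
    intro x hx
    rw [fiberPoissonBracket_four_ofFn_five, heq₀ x hx, heq₁ x hx, heq₂ x hx, heq₃ x hx, heq₄ x hx,
      heq₅ x hx]
    simp
  simpa only [aeval_I_ofFn_five] using
    exists_forall_exp_mul_aeval_I_eq_of_fiberPoissonBracket_eq_zero hs hp ha hbracket

end PoissonBracket

section Coefficients

variable {𝕜 : Type*}

/-- The coefficient `a₀` of `p_x⁴`, with `p` standing for `h'(x)`. -/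
def coeffZero [Field 𝕜] (μ A0 p : 𝕜) : 𝕜 :=
  A0 / μ * p ^ 4

/-- The coefficient `a₁` of `p_x³ p_y`, with `u` and `p` standing for `h(x)` and `h'(x)`. -/
def coeffOne [Field 𝕜] (A0 A1 u p : 𝕜) : 𝕜 :=
  (A1 - A0 * u) * p ^ 3

/-- The coefficient `a₂` of `p_x² p_y²`, with `u` and `p` standing for `h(x)` and `h'(x)`. -/
def coeffTwo [Field 𝕜] (μ A0 A1 A2 u p : 𝕜) : 𝕜 :=
  ((1/2) * μ * A0 * u ^ 2 + 2 * A0 / μ * p ^ 2 - μ * A1 * u + A2 / μ) * p ^ 2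

variable [NontriviallyNormedField 𝕜] {μ A0 A1 A2 : 𝕜} {h h' : 𝕜 → 𝕜} {q x : 𝕜} {s : Set 𝕜}

lemma hasDerivWithinAt_coeffZero (hp : h' x ≠ 0) (hh' : HasDerivWithinAt h' q s x) :
    HasDerivWithinAt (fun t ↦ coeffZero μ A0 (h' t))
      (4 * q * coeffZero μ A0 (h' x) / h' x) s x := by
  refine ((hh'.pow 4).const_mul (A0 / μ)).congr_deriv ?_
  simp only [coeffZero]
  field_simp [hp]
  push_cast
  ring

lemma hasDerivWithinAt_coeffOne (hμ : μ ≠ 0) (hp : h' x ≠ 0)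
    (hh : HasDerivWithinAt h (h' x) s x) (hh' : HasDerivWithinAt h' q s x) :
    HasDerivWithinAt (fun t ↦ coeffOne A0 A1 (h t) (h' t))
      (3 * q * coeffOne A0 A1 (h x) (h' x) / h' x - μ * coeffZero μ A0 (h' x)) s x := by
  refine (((hh.const_mul A0).const_sub A1).mul (hh'.pow 3)).congr_deriv ?_
  simp only [coeffZero, coeffOne, Pi.pow_apply]
  field_simp [hp]
  push_cast
  ring

lemma hasDerivWithinAt_coeffTwo [NeZero (2 : 𝕜)] (hp : h' x ≠ 0)
    (hh : HasDerivWithinAt h (h' x) s x) (hh' : HasDerivWithinAt h' q s x) :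
    HasDerivWithinAt (fun t ↦ coeffTwo μ A0 A1 A2 (h t) (h' t))
      (q * (2 * coeffTwo μ A0 A1 A2 (h x) (h' x) + 4 * coeffZero μ A0 (h' x)) / h' x
        - μ * coeffOne A0 A1 (h x) (h' x)) s x := by
  have hfactor := ((((hh.pow 2).const_mul ((1/2) * μ * A0)).add
    ((hh'.pow 2).const_mul (2 * A0 / μ))).sub (hh.const_mul (μ * A1))).add_const (A2 / μ)
  refine (hfactor.mul (hh'.pow 2)).congr_deriv ?_
  simp only [coeffZero, coeffOne, coeffTwo, Pi.pow_apply, Pi.add_apply, Pi.sub_apply]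
  field_simp [hp]
  push_cast
  ring

end Coefficients

theorem stmt_3_general {s : Set ℝ} (hs : Convex ℝ s) {μ A0 A1 A2 : ℝ} (hμ : μ ≠ 0)
    {h h' h'' a3 a3' a4 a4' : ℝ → ℝ}
    (hh : ∀ x ∈ s, HasDerivWithinAt h (h' x) s x)
    (hh' : ∀ x ∈ s, HasDerivWithinAt h' (h'' x) s x) (hhx : ∀ x ∈ s, h' x ≠ 0)
    (ha3 : ∀ x ∈ s, HasDerivWithinAt a3 (a3' x) s x)
    (ha4 : ∀ x ∈ s, HasDerivWithinAt a4 (a4' x) s x)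
    (heq4 : ∀ x ∈ s, μ * coeffTwo μ A0 A1 A2 (h x) (h' x) * h' x + a3' x * h' x
      - 3 * coeffOne A0 A1 (h x) (h' x) * h'' x - a3 x * h'' x = 0)
    (heq5 : ∀ x ∈ s, μ * a3 x * h' x + a4' x * h' x
      - 2 * coeffTwo μ A0 A1 A2 (h x) (h' x) * h'' x = 0)
    (heq6 : ∀ x ∈ s, μ * a4 x * h' x - a3 x * h'' x = 0) :
    ∃ c : ℂ, ∀ x ∈ s,
      Complex.exp (Complex.I * (μ : ℂ) * (x : ℂ)) *
        ( (((h'' x / (μ * h' x) : ℝ) : ℂ) - Complex.I) * (a3 x : ℂ)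
          - ((((1/2) * μ * A0 * (h x)^2 + A0 / μ * (h' x)^2
                - μ * A1 * h x + A2 / μ) * (h' x)^2 : ℝ) : ℂ)
          + Complex.I * (((A1 - A0 * h x) * (h' x)^3 : ℝ) : ℂ) ) = c := by
  have ha0 x (hx : x ∈ s) := hasDerivWithinAt_coeffZero (μ := μ) (A0 := A0) (hhx x hx) (hh' x hx)
  have ha1 x (hx : x ∈ s) :=
    hasDerivWithinAt_coeffOne (A0 := A0) (A1 := A1) hμ (hhx x hx) (hh x hx) (hh' x hx)
  have ha2 x (hx : x ∈ s) := hasDerivWithinAt_coeffTwo (μ := μ) (A0 := A0) (A1 := A1) (A2 := A2)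
    (hhx x hx) (hh x hx) (hh' x hx)
  obtain ⟨c, hc⟩ := exists_forall_exp_mul_eq_of_quartic_bracket_eqs hs (μ := μ) (q := h'')
    hhx ha0 ha1 ha2 ha3 ha4
    (fun x hx ↦ by field_simp [hhx x hx]; ring)
    (fun x hx ↦ by field_simp [hhx x hx]; ring)
    (fun x hx ↦ by field_simp [hhx x hx]; ring)
    (fun x hx ↦ by linear_combination heq4 x hx)
    (fun x hx ↦ by linear_combination heq5 x hx)
    (fun x hx ↦ by linear_combination heq6 x hx)
  refine ⟨c, fun x hx ↦ ?_⟩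
  have ha4_eq : a4 x = h'' x / (μ * h' x) * a3 x := by
    field_simp [hhx x hx]
    linear_combination heq6 x hx
  rw [← hc x hx, ha4_eq]
  simp only [coeffZero, coeffOne, coeffTwo]
  push_cast
  ring

theorem stmt_3 (μ A0 A1 A2 : ℝ) (hμ : μ ≠ 0) (h a3 a4 : ℝ → ℝ)
    (hh : ContDiff ℝ (⊤ : ℕ∞) h) (hhx : ∀ x, deriv h x ≠ 0)
    (ha3 : ContDiff ℝ (⊤ : ℕ∞) a3) (ha4 : ContDiff ℝ (⊤ : ℕ∞) a4)
    -- a₀, a₁, a₂ are given by the formulas of Statement 2 and substituted below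
    (heq4 : ∀ x : ℝ,
      μ * (((1/2) * μ * A0 * (h x)^2 + 2 * A0 / μ * (deriv h x)^2
              - μ * A1 * h x + A2 / μ) * (deriv h x)^2) * deriv h x
        + deriv a3 x * deriv h x
        - 3 * ((A1 - A0 * h x) * (deriv h x)^3) * deriv (deriv h) x
        - a3 x * deriv (deriv h) x = 0)
    (heq5 : ∀ x : ℝ,
      μ * a3 x * deriv h x + deriv a4 x * deriv h x
        - 2 * (((1/2) * μ * A0 * (h x)^2 + 2 * A0 / μ * (deriv h x)^2
                  - μ * A1 * h x + A2 / μ) * (deriv h x)^2) * deriv (deriv h) x = 0)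
    (heq6 : ∀ x : ℝ,
      μ * a4 x * deriv h x - a3 x * deriv (deriv h) x = 0) :
    ∃ c : ℂ, ∀ x : ℝ,
      Complex.exp (Complex.I * (μ : ℂ) * (x : ℂ)) *
        ( ((((deriv (deriv h) x) / (μ * deriv h x) : ℝ) : ℂ) - Complex.I) * (a3 x : ℂ)
          - ((((1/2) * μ * A0 * (h x)^2 + A0 / μ * (deriv h x)^2
                - μ * A1 * h x + A2 / μ) * (deriv h x)^2 : ℝ) : ℂ)
          + Complex.I * (((A1 - A0 * h x) * (deriv h x)^3 : ℝ) : ℂ) ) = c := by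
  have hh' := (contDiff_infty_iff_deriv.mp hh).2
  obtain ⟨c, hc⟩ := stmt_3_general (s := Set.univ) convex_univ hμ
    (fun x _ ↦ (hh.differentiable (by simp) x).hasDerivAt.hasDerivWithinAt)
    (fun x _ ↦ (hh'.differentiable (by simp) x).hasDerivAt.hasDerivWithinAt) (fun x _ ↦ hhx x)
    (fun x _ ↦ (ha3.differentiable (by simp) x).hasDerivAt.hasDerivWithinAt)
    (fun x _ ↦ (ha4.differentiable (by simp) x).hasDerivAt.hasDerivWithinAt)
    (fun x _ ↦ heq4 x) (fun x _ ↦ heq5 x) (fun x _ ↦ heq6 x)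
  exact ⟨c, fun x ↦ hc x trivial⟩
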